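/- arXiv:2604.06329 — 3 statements merged into one kernel-verified Lean document; each statement's English description precedes it below -/
import Mathlib

section
/- In the restricted game RL^1(X,Y;v) with distinct decreasing contest values, the min-max value of player X is bounded above by the minimum of UB over the equalizing points of the top-k contest sets: inf_{F_Y ∈ 𝔽^1(Y)} sup_{F_X ∈ 𝔽(X)} π_X(F_X,F_Y) ≤ min_{k ∈ {1,…,C}} UB(q([k])). -/
open MeasureTheory Finset

noncomputable section

/-- Admissible strategies for a player with budget `B`: Borel probability measures on `ℝ^C`
supported (i.e. concentrated, with full measure) on the nonnegative orthant, whose expected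
total allocation is at most `B`. -/
def Strat (C : ℕ) (B : ℝ) : Set (Measure (Fin C → ℝ)) :=
  {μ | IsProbabilityMeasure μ ∧ μ {x | ∀ c, 0 ≤ x c} = 1 ∧
    ∫⁻ x, ENNReal.ofReal (∑ c, x c) ∂μ ≤ ENNReal.ofReal B}

/-- Expected payoff to player `X`: `E[Σ_c v_c · 1{x_c ≥ y_c}]`. -/
def payoff (C : ℕ) (v : Fin C → ℝ) (F G : Measure (Fin C → ℝ)) : ℝ :=
  ∫ x, (∫ y, (∑ c, if y c ≤ x c then v c else 0) ∂G) ∂F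

/-- Allocations `t·e_c` with at most one positive coordinate. -/
def R1 (C : ℕ) : Set (Fin C → ℝ) :=
  {y | ∃ c : Fin C, ∃ t : ℝ, 0 ≤ t ∧ y = fun c' => if c' = c then t else 0}

/-- Restricted strategies: admissible strategies concentrated on `R1`. -/
def Strat1 (C : ℕ) (B : ℝ) : Set (Measure (Fin C → ℝ)) :=
  {μ | μ ∈ Strat C B ∧ μ (R1 C) = 1}

/-- The upper-bound objective `UB(p)`. -/
def UB (C : ℕ) (v : Fin C → ℝ) (X Y : ℝ) (p : Fin C → ℝ) : ℝ :=
  if Y / X * (∑ c, v c * p c) ≤ ⨆ c, v c * p c then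
    1 - Y / (2 * X) * (∑ c, v c * p c) ^ 2 / (⨆ c, v c * p c)
  else
    1 - (∑ c, v c * p c) + X / (2 * Y) * (⨆ c, v c * p c)

/-- The equalizing point `q(S)` of a subset `S` of contests. -/
def qvec (C : ℕ) (v : Fin C → ℝ) (S : Finset (Fin C)) : Fin C → ℝ :=
  fun c => if c ∈ S then
    (∏ j ∈ S.erase c, v j) / (∑ l ∈ S, ∏ j ∈ S.erase l, v j)
  else 0

/-- The top `k` contests in value, `[k] = {1,…,k}`. -/
def topk (C k : ℕ) : Finset (Fin C) := Finset.univ.filter (fun c => (c : ℕ) < k)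

/-!
Player Y draws one contest `c` with probability `p c`, abandons it with probability `1 - a`, and
otherwise bids there an amount uniform on `[0, 2Y / a]`, which spends `Y` on average. Against
nonnegative bids `x` this leaves Y winning contest `c` with probability at least
`p c * a * (1 - a * x c / (2Y))`. Hence X's payoff has an affine majorant in the total bid `∑ x c`,
so the resulting bound involves X's strategy only through the budget: the payoff is at most
`1 - a V + a² M X / (2Y)`, where `V = ∑ v c * p c` and `M = max v c * p c`. Minimising this
quadratic over `a ∈ (0, 1]` gives `UB p`; its two branches are the interior minimum
`a = Y V / (X M)` and the corner `a = 1`.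
-/

lemma measurable_piSingle {ι : Type*} [DecidableEq ι] {π : ι → Type*} [∀ i, Zero (π i)]
    [∀ i, MeasurableSpace (π i)] (c : ι) : Measurable (Pi.single c : π c → ∀ i, π i) :=
  measurable_update 0

section SingleContestMixture

variable {ι : Type*} [Fintype ι] {p : ι → ℝ} {τ : Measure ℝ}

lemma sum_ofReal_eq_one_of_mem_stdSimplex (hp : p ∈ stdSimplex ℝ ι) :
    ∑ c, ENNReal.ofReal (p c) = 1 := by
  rw [← ENNReal.ofReal_sum_of_nonneg fun c _ => hp.1 c, hp.2, ENNReal.ofReal_one]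

variable [DecidableEq ι]

/-- The law of a random allocation with at most one nonzero coordinate: the coordinate `c` is drawn
with probability `p c`, and the bid on it is then drawn from `τ`. -/
def singleContestMixture (p : ι → ℝ) (τ : Measure ℝ) : Measure (ι → ℝ) :=
  ∑ c, ENNReal.ofReal (p c) • τ.map (Pi.single c)

lemma isProbabilityMeasure_singleContestMixture [IsProbabilityMeasure τ]
    (hp : p ∈ stdSimplex ℝ ι) : IsProbabilityMeasure (singleContestMixture p τ) := by
  constructor
  simp only [singleContestMixture, Measure.finsetSum_apply, Measure.smul_apply, smul_eq_mul,
    Measure.map_apply (measurable_piSingle _) MeasurableSet.univ, Set.preimage_univ, measure_univ,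
    mul_one, sum_ofReal_eq_one_of_mem_stdSimplex hp]

lemma singleContestMixture_apply_eq_one [IsProbabilityMeasure τ] (hp : p ∈ stdSimplex ℝ ι)
    {s : Set (ι → ℝ)} (hs : ∀ c, τ {t | Pi.single c t ∈ s} = 1) :
    singleContestMixture p τ s = 1 := by
  have := isProbabilityMeasure_singleContestMixture (τ := τ) hp
  refine le_antisymm prob_le_one ?_
  calc (1 : ENNReal) = ∑ c, ENNReal.ofReal (p c) * τ {t | Pi.single c t ∈ s} := by
        simp only [hs, mul_one, sum_ofReal_eq_one_of_mem_stdSimplex hp]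
    _ ≤ ∑ c, ENNReal.ofReal (p c) * τ.map (Pi.single c) s := by
        gcongr with c
        exact Measure.le_map_apply (measurable_piSingle c).aemeasurable s
    _ = singleContestMixture p τ s := by
        simp only [singleContestMixture, Measure.finsetSum_apply, Measure.smul_apply, smul_eq_mul]

lemma lintegral_sum_singleContestMixture (hp : p ∈ stdSimplex ℝ ι) :
    ∫⁻ y, ENNReal.ofReal (∑ c, y c) ∂singleContestMixture p τ = ∫⁻ t, ENNReal.ofReal t ∂τ := by
  have total_bid_map (c : ι) : ∫⁻ y, ENNReal.ofReal (∑ i, y i) ∂τ.map (Pi.single c) =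
      ∫⁻ t, ENNReal.ofReal t ∂τ := by
    rw [lintegral_map (by fun_prop) (measurable_piSingle c)]
    simp only [Finset.sum_pi_single', Finset.mem_univ, if_true]
  simp only [singleContestMixture, lintegral_finsetSum_measure, lintegral_smul_measure, smul_eq_mul,
    total_bid_map, ← Finset.sum_mul, sum_ofReal_eq_one_of_mem_stdSimplex hp, one_mul]

lemma mul_real_Ioi_le_singleContestMixture_real [IsProbabilityMeasure τ] (hp : p ∈ stdSimplex ℝ ι)
    (c : ι) (x : ℝ) :
    p c * τ.real (Set.Ioi x) ≤ (singleContestMixture p τ).real {y | x < y c} := by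
  have := isProbabilityMeasure_singleContestMixture (τ := τ) hp
  have hmap : τ.map (Pi.single c) {y : ι → ℝ | x < y c} = τ (Set.Ioi x) := by
    rw [Measure.map_apply (measurable_piSingle c)
      (measurableSet_lt measurable_const (measurable_pi_apply c))]
    simp only [Set.preimage_ofPred_eq, Pi.single_eq_same, Set.Ioi_def]
  have hle : ENNReal.ofReal (p c) * τ (Set.Ioi x) ≤ singleContestMixture p τ {y | x < y c} := by
    simp only [singleContestMixture, Measure.finsetSum_apply, Measure.smul_apply, smul_eq_mul,
      ← hmap]
    exact Finset.single_le_sum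
      (f := fun i => ENNReal.ofReal (p i) * τ.map (Pi.single i) {y : ι → ℝ | x < y c})
      (fun _ _ => zero_le) (Finset.mem_univ c)
  simpa [measureReal_def, hp.1 c] using ENNReal.toReal_mono (measure_ne_top _ _) hle

lemma singleContestMixture_real_setOf_le_le_one_sub [IsProbabilityMeasure τ]
    (hp : p ∈ stdSimplex ℝ ι) (c : ι) (x : ℝ) :
    (singleContestMixture p τ).real {y | y c ≤ x} ≤ 1 - p c * τ.real (Set.Ioi x) := by
  have := isProbabilityMeasure_singleContestMixture (τ := τ) hp
  have hcompl : {y : ι → ℝ | y c ≤ x} = {y | x < y c}ᶜ := by ext; simp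
  rw [hcompl,
    probReal_compl_eq_one_sub (measurableSet_lt measurable_const (measurable_pi_apply c))]
  linarith [mul_real_Ioi_le_singleContestMixture_real (τ := τ) hp c x]

lemma singleContestMixture_mem_strat1 {C : ℕ} {p : Fin C → ℝ} {B : ℝ} [IsProbabilityMeasure τ]
    (hp : p ∈ stdSimplex ℝ (Fin C)) (hτ : τ (Set.Ici 0) = 1)
    (hmean : ∫⁻ t, ENNReal.ofReal t ∂τ ≤ ENNReal.ofReal B) :
    singleContestMixture p τ ∈ Strat1 C B := by
  have apply_eq_one {s : Set (Fin C → ℝ)}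
      (hs : ∀ c, ∀ t : ℝ, 0 ≤ t → (Pi.single c t : Fin C → ℝ) ∈ s) :
      singleContestMixture p τ s = 1 :=
    singleContestMixture_apply_eq_one hp fun c =>
      le_antisymm prob_le_one (hτ.ge.trans (measure_mono (hs c)))
  refine ⟨⟨isProbabilityMeasure_singleContestMixture hp, ?_, ?_⟩, ?_⟩
  · exact apply_eq_one fun c t ht => (Pi.single_nonneg (α := fun _ => ℝ)).2 ht
  · exact (lintegral_sum_singleContestMixture hp).trans_le hmean
  · exact apply_eq_one fun c t ht => ⟨c, t, ht, funext (Pi.single_apply c t)⟩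

end SingleContestMixture

section ZeroInflatedUniform

open ProbabilityTheory

variable {a b : ℝ}

/-- The law of a bid that is uniform on `[0, b]` with probability `a` and zero otherwise, for
`0 ≤ a ≤ 1` and `0 < b`. -/
def zeroInflatedUniform (a b : ℝ) : Measure ℝ :=
  ENNReal.ofReal (1 - a) • Measure.dirac 0 + ENNReal.ofReal a • volume[|Set.Icc 0 b]

lemma isProbabilityMeasure_uniform_Icc (hb : 0 < b) :
    IsProbabilityMeasure volume[|Set.Icc 0 b] :=
  cond_isProbabilityMeasure_of_finite (by simpa) (by simp)

lemma zeroInflatedUniform_apply_eq_one (ha : a ∈ Set.Icc 0 1) {s : Set ℝ} (hzero : 0 ∈ s)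
    (hs : volume[|Set.Icc 0 b] s = 1) : zeroInflatedUniform a b s = 1 := by
  simp only [zeroInflatedUniform, Measure.add_apply, Measure.smul_apply, smul_eq_mul,
    Measure.dirac_apply_of_mem hzero, hs, mul_one]
  rw [← ENNReal.ofReal_add (sub_nonneg.2 ha.2) ha.1, sub_add_cancel, ENNReal.ofReal_one]

lemma isProbabilityMeasure_zeroInflatedUniform (ha : a ∈ Set.Icc 0 1) (hb : 0 < b) :
    IsProbabilityMeasure (zeroInflatedUniform a b) := by
  have := isProbabilityMeasure_uniform_Icc hb
  exact ⟨zeroInflatedUniform_apply_eq_one ha (Set.mem_univ 0) measure_univ⟩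

lemma zeroInflatedUniform_Ici (ha : a ∈ Set.Icc 0 1) (hb : 0 < b) :
    zeroInflatedUniform a b (Set.Ici 0) = 1 := by
  have := isProbabilityMeasure_uniform_Icc hb
  refine zeroInflatedUniform_apply_eq_one ha Set.self_mem_Ici (le_antisymm prob_le_one ?_)
  calc (1 : ENNReal) = volume[|Set.Icc 0 b] (Set.Icc 0 b) :=
        (cond_apply_self (by simpa) (by simp)).symm
    _ ≤ _ := measure_mono Set.Icc_subset_Ici_self

lemma lintegral_ofReal_uniform_Icc (hb : 0 < b) :
    ∫⁻ t, ENNReal.ofReal t ∂volume[|Set.Icc 0 b] = ENNReal.ofReal (b / 2) := by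
  have hIcc : ∫⁻ t in Set.Icc 0 b, ENNReal.ofReal t = ENNReal.ofReal (b ^ 2 / 2) := by
    have hintegrable : IntegrableOn (fun t : ℝ => t) (Set.Icc 0 b) :=
      continuous_id.integrableOn_Icc
    have hnonneg : ∀ᵐ t ∂volume.restrict (Set.Icc 0 b), 0 ≤ t :=
      (ae_restrict_mem measurableSet_Icc).mono fun t ht => ht.1
    rw [← ofReal_integral_eq_lintegral_ofReal hintegrable hnonneg,
      integral_Icc_eq_integral_Ioc, ← intervalIntegral.integral_of_le hb.le, integral_id]
    simp
  rw [ProbabilityTheory.cond, lintegral_smul_measure, hIcc, Real.volume_Icc, sub_zero, smul_eq_mul,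
    ← ENNReal.ofReal_inv_of_pos hb, ← ENNReal.ofReal_mul (inv_nonneg.2 hb.le)]
  congr 1
  field_simp

lemma lintegral_ofReal_zeroInflatedUniform (ha : 0 ≤ a) (hb : 0 < b) :
    ∫⁻ t, ENNReal.ofReal t ∂zeroInflatedUniform a b = ENNReal.ofReal (a * b / 2) := by
  simp only [zeroInflatedUniform, lintegral_add_measure, lintegral_smul_measure, smul_eq_mul,
    lintegral_dirac, ENNReal.ofReal_zero, mul_zero, zero_add, lintegral_ofReal_uniform_Icc hb]
  rw [← ENNReal.ofReal_mul ha, mul_div_assoc]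

lemma one_sub_div_le_uniform_Icc_real_Ioi {x : ℝ} (hb : 0 < b) (hx : 0 ≤ x) :
    1 - x / b ≤ volume[|Set.Icc 0 b].real (Set.Ioi x) := by
  have hsub : Set.Ioc x b ⊆ Set.Icc 0 b ∩ Set.Ioi x :=
    fun t ht => ⟨⟨hx.trans ht.1.le, ht.2⟩, ht.1⟩
  have hfin : volume (Set.Icc 0 b ∩ Set.Ioi x) ≠ ⊤ :=
    measure_ne_top_of_subset Set.inter_subset_left (by simp)
  calc 1 - x / b = b⁻¹ * (b - x) := by field_simp
    _ ≤ b⁻¹ * volume.real (Set.Ioc x b) := by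
        gcongr
        rw [Real.volume_real_Ioc]
        exact le_max_left _ _
    _ ≤ b⁻¹ * volume.real (Set.Icc 0 b ∩ Set.Ioi x) :=
        mul_le_mul_of_nonneg_left (measureReal_mono hsub hfin) (inv_nonneg.2 hb.le)
    _ = _ := by simp [measureReal_def, cond_apply measurableSet_Icc, hb.le]

lemma mul_one_sub_div_le_zeroInflatedUniform_real_Ioi {x : ℝ} (ha : 0 ≤ a) (hb : 0 < b)
    (hx : 0 ≤ x) : a * (1 - x / b) ≤ (zeroInflatedUniform a b).real (Set.Ioi x) := by
  have := isProbabilityMeasure_uniform_Icc hb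
  have hfin (r : ℝ) (μ : Measure ℝ) [IsProbabilityMeasure μ] :
      (ENNReal.ofReal r • μ) (Set.Ioi x) ≠ ⊤ :=
    ENNReal.mul_ne_top ENNReal.ofReal_ne_top (measure_ne_top μ _)
  rw [zeroInflatedUniform, measureReal_add_apply (hfin _ _) (hfin _ _),
    measureReal_ennreal_smul_apply, measureReal_ennreal_smul_apply, ENNReal.toReal_ofReal ha]
  have huniform := mul_le_mul_of_nonneg_left (one_sub_div_le_uniform_Icc_real_Ioi hb hx) ha
  exact huniform.trans (le_add_of_nonneg_left (by positivity))

end ZeroInflatedUniform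

section Payoff

variable {C : ℕ} {v : Fin C → ℝ} {F G : Measure (Fin C → ℝ)} {B : ℝ}

lemma integral_sum_ite_le_eq_sum_mul_real [IsFiniteMeasure G] (v x : Fin C → ℝ) :
    ∫ y, (∑ c, if y c ≤ x c then v c else 0) ∂G = ∑ c, v c * G.real {y | y c ≤ x c} := by
  have hmeas (c : Fin C) : MeasurableSet {y : Fin C → ℝ | y c ≤ x c} :=
    measurableSet_le (measurable_pi_apply c) measurable_const
  have hindicator (c : Fin C) : (fun y : Fin C → ℝ => if y c ≤ x c then v c else 0) =
      {y | y c ≤ x c}.indicator fun _ => v c := by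
    ext y
    simp only [Set.indicator_apply, Set.mem_ofPred_eq]
  rw [integral_finsetSum]
  · refine Finset.sum_congr rfl fun c _ => ?_
    rw [hindicator, integral_indicator_const _ (hmeas c), smul_eq_mul, mul_comm]
  · intro c _
    rw [hindicator]
    exact (integrable_const _).indicator (hmeas c)

lemma integral_sum_ite_le_nonneg (hv : ∀ c, 0 ≤ v c) (x : Fin C → ℝ) :
    0 ≤ ∫ y, (∑ c, if y c ≤ x c then v c else 0) ∂G :=
  integral_nonneg fun _ => Finset.sum_nonneg fun c _ => ite_nonneg (hv c) le_rfl

lemma payoff_nonneg (hv : ∀ c, 0 ≤ v c) : 0 ≤ payoff C v F G :=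
  integral_nonneg fun x => integral_sum_ite_le_nonneg hv x

lemma nonempty_strat : Nonempty (Strat C B) := by
  refine ⟨⟨Measure.dirac 0, inferInstance, ?_, ?_⟩⟩
  · exact Measure.dirac_apply_of_mem fun _ => le_rfl
  · simp

lemma ae_nonneg_of_mem_strat (hF : F ∈ Strat C B) : ∀ᵐ x ∂F, ∀ c, 0 ≤ x c := by
  have := hF.1
  exact (prob_compl_eq_zero_iff measurableSet_Ici).2 hF.2.1

lemma ae_sum_nonneg_of_mem_strat (hF : F ∈ Strat C B) : 0 ≤ᵐ[F] fun x => ∑ c, x c :=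
  (ae_nonneg_of_mem_strat hF).mono fun _ hx => Finset.sum_nonneg fun c _ => hx c

lemma integrable_sum_of_mem_strat (hF : F ∈ Strat C B) : Integrable (fun x => ∑ c, x c) F := by
  refine ⟨by fun_prop, ?_⟩
  rw [hasFiniteIntegral_iff_ofReal (ae_sum_nonneg_of_mem_strat hF)]
  exact hF.2.2.trans_lt ENNReal.ofReal_lt_top

lemma integral_sum_le_of_mem_strat (hB : 0 ≤ B) (hF : F ∈ Strat C B) :
    ∫ x, ∑ c, x c ∂F ≤ B := by
  rw [integral_eq_lintegral_of_nonneg_ae (ae_sum_nonneg_of_mem_strat hF) (by fun_prop)]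
  exact ENNReal.toReal_le_of_le_ofReal hB hF.2.2

lemma payoff_le_of_affine_majorant [IsFiniteMeasure G] {α β : ℝ} (hv : ∀ c, 0 ≤ v c) (hβ : 0 ≤ β)
    (hB : 0 ≤ B) (hF : F ∈ Strat C B)
    (hG : ∀ x : Fin C → ℝ, (∀ c, 0 ≤ x c) →
      ∑ c, v c * G.real {y | y c ≤ x c} ≤ α + β * ∑ c, x c) :
    payoff C v F G ≤ α + β * B := by
  have := hF.1
  have htotal := (integrable_sum_of_mem_strat hF).const_mul β
  calc payoff C v F G ≤ ∫ x, (α + β * ∑ c, x c) ∂F := by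
        refine integral_mono_of_nonneg (ae_of_all F fun x => integral_sum_ite_le_nonneg hv x)
          ((integrable_const α).add htotal) ?_
        filter_upwards [ae_nonneg_of_mem_strat hF] with x hx
        exact (integral_sum_ite_le_eq_sum_mul_real v x).trans_le (hG x hx)
    _ = α + β * ∫ x, ∑ c, x c ∂F := by
        rw [integral_add (integrable_const α) htotal, integral_const_mul, integral_const,
          probReal_univ, one_smul]
    _ ≤ α + β * B := by
        gcongr
        exact integral_sum_le_of_mem_strat hB hF

lemma iInf_iSup_payoff_le {X Y u : ℝ} (hv : ∀ c, 0 ≤ v c) (hG : G ∈ Strat1 C Y)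
    (hu : ∀ F ∈ Strat C X, payoff C v F G ≤ u) :
    (⨅ G : Strat1 C Y, ⨆ F : Strat C X, payoff C v F.1 G.1) ≤ u := by
  have : Nonempty (Strat C X) := nonempty_strat
  have hbdd : BddBelow (Set.range fun G : Strat1 C Y => ⨆ F : Strat C X, payoff C v F.1 G.1) :=
    ⟨0, Set.forall_mem_range.2 fun _ => Real.iSup_nonneg fun _ => payoff_nonneg hv⟩
  exact (ciInf_le hbdd ⟨G, hG⟩).trans (ciSup_le fun F => hu F.1 F.2)

end Payoff

section UpperBound

variable {C : ℕ} {v p : Fin C → ℝ} {a b X Y : ℝ}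

lemma sum_mul_real_singleContestMixture_zeroInflatedUniform_le {M : ℝ} (hv : ∀ c, 0 ≤ v c)
    (hsum : ∑ c, v c = 1) (hp : p ∈ stdSimplex ℝ (Fin C)) (ha : a ∈ Set.Icc 0 1) (hb : 0 < b)
    (hM : ∀ c, v c * p c ≤ M) {x : Fin C → ℝ} (hx : ∀ c, 0 ≤ x c) :
    ∑ c, v c * (singleContestMixture p (zeroInflatedUniform a b)).real {y | y c ≤ x c} ≤
      1 - a * ∑ c, v c * p c + a / b * M * ∑ c, x c := by
  have := isProbabilityMeasure_zeroInflatedUniform ha hb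
  have win_prob_le (c : Fin C) :
      (singleContestMixture p (zeroInflatedUniform a b)).real {y | y c ≤ x c} ≤
        1 - p c * (a * (1 - x c / b)) := by
    grw [singleContestMixture_real_setOf_le_le_one_sub hp c,
      ← mul_one_sub_div_le_zeroInflatedUniform_real_Ioi ha.1 hb (hx c)]
    exact hp.1 c
  have hab : 0 ≤ a / b := div_nonneg ha.1 hb.le
  calc _ ≤ ∑ c, v c * (1 - p c * (a * (1 - x c / b))) := by
        gcongr with c
        · exact hv c
        · exact win_prob_le c
    _ = ∑ c, (v c - a * (v c * p c) + a / b * (v c * p c) * x c) :=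
        Finset.sum_congr rfl fun c _ => by ring
    _ ≤ ∑ c, (v c - a * (v c * p c) + a / b * M * x c) := by
        gcongr with c
        · exact hx c
        · exact hM c
    _ = 1 - a * ∑ c, v c * p c + a / b * M * ∑ c, x c := by
        rw [Finset.sum_add_distrib, Finset.sum_sub_distrib, hsum, Finset.mul_sum, Finset.mul_sum]

lemma iInf_iSup_payoff_le_quadratic (hv : ∀ c, 0 ≤ v c) (hsum : ∑ c, v c = 1)
    (hX : 0 ≤ X) (hY : 0 < Y) (hp : p ∈ stdSimplex ℝ (Fin C)) (ha : a ∈ Set.Ioc 0 1) :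
    (⨅ G : Strat1 C Y, ⨆ F : Strat C X, payoff C v F.1 G.1) ≤
      1 - a * ∑ c, v c * p c + a ^ 2 * (⨆ c, v c * p c) * X / (2 * Y) := by
  have hle (c : Fin C) : v c * p c ≤ ⨆ c, v c * p c :=
    le_ciSup (f := fun c => v c * p c) (Set.finite_range _).bddAbove c
  have hM : 0 ≤ ⨆ c, v c * p c := Real.iSup_nonneg fun c => mul_nonneg (hv c) (hp.1 c)
  have ha0 : 0 < a := ha.1
  have haIcc : a ∈ Set.Icc 0 1 := Set.Ioc_subset_Icc_self ha
  have hb : 0 < 2 * Y / a := by positivity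
  have := isProbabilityMeasure_zeroInflatedUniform haIcc hb
  have := isProbabilityMeasure_singleContestMixture (τ := zeroInflatedUniform a (2 * Y / a)) hp
  have hmean : ∫⁻ t, ENNReal.ofReal t ∂zeroInflatedUniform a (2 * Y / a) = ENNReal.ofReal Y := by
    rw [lintegral_ofReal_zeroInflatedUniform ha0.le hb]
    congr 1
    field_simp
  refine iInf_iSup_payoff_le hv
    (singleContestMixture_mem_strat1 hp (zeroInflatedUniform_Ici haIcc hb) hmean.le) fun F hF => ?_
  calc _ ≤ 1 - a * ∑ c, v c * p c + a / (2 * Y / a) * (⨆ c, v c * p c) * X :=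
        payoff_le_of_affine_majorant hv (by positivity) hX hF fun x hx =>
          sum_mul_real_singleContestMixture_zeroInflatedUniform_le hv hsum hp haIcc hb hle hx
    _ = _ := by field_simp

lemma qvec_mem_stdSimplex {S : Finset (Fin C)} (hpos : ∀ c ∈ S, 0 < v c) (hS : S.Nonempty) :
    qvec C v S ∈ stdSimplex ℝ (Fin C) := by
  have hprod (c : Fin C) : 0 < ∏ j ∈ S.erase c, v j :=
    Finset.prod_pos fun j hj => hpos j (Finset.mem_of_mem_erase hj)
  have hden : 0 < ∑ l ∈ S, ∏ j ∈ S.erase l, v j := Finset.sum_pos (fun l _ => hprod l) hS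
  refine ⟨fun c => ite_nonneg (div_pos (hprod c) hden).le le_rfl, ?_⟩
  simp only [qvec]
  rw [Finset.sum_ite_mem, Finset.univ_inter, ← Finset.sum_div, div_self hden.ne']

lemma mem_topk_succ (i : Fin C) : i ∈ topk C ((i : ℕ) + 1) := by
  simp [topk]

theorem RL1_minmax_upper_bound_topk_general (hpos : ∀ c, 0 < v c) (hsum : ∑ c, v c = 1)
    (hX : 0 < X) (hY : 0 < Y) (hp : p ∈ stdSimplex ℝ (Fin C)) :
    (⨅ G : Strat1 C Y, ⨆ F : Strat C X, payoff C v F.1 G.1) ≤ UB C v X Y p := by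
  obtain ⟨c₀, hc₀, hpc₀⟩ : ∃ c ∈ Finset.univ, 0 < p c :=
    Finset.exists_lt_of_sum_lt (f := fun _ => (0 : ℝ)) (by simp [hp.2])
  have hM : 0 < ⨆ c, v c * p c := (mul_pos (hpos c₀) hpc₀).trans_le
    (le_ciSup (f := fun c => v c * p c) (Set.finite_range _).bddAbove c₀)
  have hV : 0 < ∑ c, v c * p c := Finset.sum_pos'
    (fun c _ => mul_nonneg (hpos c).le (hp.1 c)) ⟨c₀, hc₀, mul_pos (hpos c₀) hpc₀⟩
  have quadratic_bound {a : ℝ} (ha : a ∈ Set.Ioc 0 1) :=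
    iInf_iSup_payoff_le_quadratic (fun c => (hpos c).le) hsum hX.le hY hp ha
  unfold UB
  set M := ⨆ c, v c * p c
  set V := ∑ c, v c * p c
  split_ifs with hcase
  · refine (quadratic_bound (a := Y / X * V / M)
      ⟨by positivity, (div_le_one hM).2 hcase⟩).trans_eq ?_
    field_simp
    ring
  · refine (quadratic_bound ⟨one_pos, le_rfl⟩).trans_eq ?_
    field_simp

end UpperBound

/-- Theorem 2, part 2: in the restricted game `RL^1(X,Y;v)` with distinct
decreasing contest values, the min-max value of player X is at most
`min_{k ∈ {1,…,C}} UB(q([k]))`. -/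
theorem RL1_minmax_upper_bound_topk (C : ℕ) (hC : 0 < C) (v : Fin C → ℝ)
    (hpos : ∀ c, 0 < v c) (hdec : StrictAnti v) (hsum : ∑ c, v c = 1)
    (X Y : ℝ) (hX : 0 < X) (hY : 0 < Y) :
    (⨅ G : Strat1 C Y, ⨆ F : Strat C X, payoff C v F.1 G.1) ≤
      ⨅ i : Fin C, UB C v X Y (qvec C v (topk C ((i : ℕ) + 1))) := by
  have : Nonempty (Fin C) := ⟨⟨0, hC⟩⟩
  exact le_ciInf fun i => RL1_minmax_upper_bound_topk_general hpos hsum hX hY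
    (qvec_mem_stdSimplex (fun c _ => hpos c) ⟨i, mem_topk_succ i⟩)
end
end

section
/- For any nonempty subset of contests S ⊆ {1,…,C}, the set Q_S is the convex hull of the equalizing points of all supersets of S: Q_S = conv{q(T) : S ⊆ T ⊆ {1,…,C}}. -/
open Finset

noncomputable section

/-- `Q_S`: probability vectors for which `v_i p_i` is maximal for every `i ∈ S`. -/
def Qset (C : ℕ) (v : Fin C → ℝ) (S : Finset (Fin C)) : Set (Fin C → ℝ) :=
  {p | p ∈ stdSimplex ℝ (Fin C) ∧ ∀ i ∈ S, v i * p i = ⨆ c, v c * p c}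

/-! Write `1/v` for the vector of reciprocals. Up to normalization of the coordinate sum, `q(T)` is
the restriction of `1/v` to `T`, that is, a vertex of the box `∏ c, [0, 1/v_c]`; the vertices with
`S ⊆ T` span the face on which the coordinates in `S` are maximal. If `p ∈ Q_S` and `M` is the
maximum of `v_c p_c`, then `p / M` lies in that face, hence in the convex hull of its vertices.
Dividing by the coordinate sum is a projective map, so it preserves convex hulls: it sends `p / M`
to `p` and the vertices to the points `q(T)`. -/

section General

variable {𝕜 ι E : Type*}

theorem eq_ciSup_iff_forall_le {α : Type*} [ConditionallyCompleteLattice α] [Finite ι]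
    {f : ι → α} {i : ι} : f i = ⨆ j, f j ↔ ∀ j, f j ≤ f i := by
  have : Nonempty ι := ⟨i⟩
  have f_le_iSup : ∀ j, f j ≤ ⨆ j, f j := le_ciSup (Set.finite_range f).bddAbove
  exact ⟨fun h j => (f_le_iSup j).trans_eq h.symm,
    fun h => le_antisymm (f_le_iSup i) (ciSup_le h)⟩

variable [Field 𝕜] [LinearOrder 𝕜] [IsStrictOrderedRing 𝕜]

theorem sum_inv_pos {f : ι → 𝕜} {s : Finset ι} (hf : ∀ i ∈ s, 0 < f i) (hs : s.Nonempty) :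
    0 < ∑ i ∈ s, (f i)⁻¹ :=
  sum_pos (fun i hi => inv_pos.2 (hf i hi)) hs

theorem inv_smul_mem_convexHull_image [AddCommGroup E] [Module 𝕜 E] (f : E →ₗ[𝕜] 𝕜)
    {s : Set E} (hf : ∀ y ∈ s, 0 < f y) {x : E} (hx : x ∈ convexHull 𝕜 s) :
    (f x)⁻¹ • x ∈ convexHull 𝕜 ((fun y => (f y)⁻¹ • y) '' s) := by
  have f_pos : 0 < f x :=
    convexHull_min hf (convex_halfSpace_gt f.isLinear 0) hx
  rw [_root_.convexHull_eq] at hx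
  obtain ⟨κ, t, w, z, hw₀, hw₁, hz, rfl⟩ := hx
  rw [t.centerMass_eq_of_sum_1 z hw₁, map_sum] at f_pos ⊢
  simp only [map_smul, smul_eq_mul] at f_pos ⊢
  -- Normalizing the sum gives the center of mass of the normalized points, with weight
  -- `w k * f (z k)` on the `k`-th one.
  have reweight : ∑ k ∈ t, w k • z k = ∑ k ∈ t, (w k * f (z k)) • (f (z k))⁻¹ • z k :=
    sum_congr rfl fun k hk => by
      rw [smul_smul, mul_inv_cancel_right₀ (hf _ (hz k hk)).ne']
  rw [reweight]
  exact t.centerMass_mem_convexHull (fun k hk => mul_nonneg (hw₀ k hk) (hf _ (hz k hk)).le) f_pos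
    fun k hk => Set.mem_image_of_mem _ (hz k hk)

theorem mem_convexHull_indicator_of_mem_Icc [Finite ι] {b x : ι → 𝕜} {S : Finset ι}
    (hx : x ∈ Set.Icc 0 b) (hxS : ∀ i ∈ S, x i = b i) :
    x ∈ convexHull 𝕜 ((fun T : Finset ι => (T : Set ι).indicator b) '' {T | S ⊆ T}) := by
  classical
  cases nonempty_fintype ι
  let endpoints (i : ι) : Set 𝕜 := if i ∈ S then {b i} else {0, b i}
  have mem_hull_endpoints (i : ι) : x i ∈ convexHull 𝕜 (endpoints i) := by
    by_cases hi : i ∈ S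
    · simp [endpoints, hi, hxS i hi]
    · simp only [endpoints, hi, if_false, convexHull_pair]
      have b_nonneg : 0 ≤ b i := (hx.1 i).trans (hx.2 i)
      exact segment_eq_Icc b_nonneg ▸ ⟨hx.1 i, hx.2 i⟩
  refine convexHull_mono ?_ (mem_convexHull_pi (s := Set.univ) fun i _ => mem_hull_endpoints i)
  intro z hz
  refine ⟨({i | z i = b i} : Finset ι), fun i hi => ?_, funext fun i => ?_⟩
  · simpa [endpoints, hi] using hz i trivial
  · have z_eq : z i = 0 ∨ z i = b i := by
      have := hz i trivial
      by_cases hi : i ∈ S <;> simp_all [endpoints]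
    by_cases h : z i = b i <;> simp_all

end General

section Equalizing

variable {C : ℕ} {v : Fin C → ℝ} {S T : Finset (Fin C)} {p : Fin C → ℝ}

theorem mem_Qset_iff :
    p ∈ Qset C v S ↔ p ∈ stdSimplex ℝ (Fin C) ∧ ∀ i ∈ S, ∀ c, v c * p c ≤ v i * p i :=
  and_congr_right fun _ => forall₂_congr fun i _ =>
    eq_ciSup_iff_forall_le (f := fun c => v c * p c) (i := i)

theorem convex_Qset : Convex ℝ (Qset C v S) := by
  intro p hp q hq a b ha hb hab
  rw [mem_Qset_iff] at hp hq ⊢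
  refine ⟨convex_stdSimplex ℝ _ hp.1 hq.1 ha hb hab, fun i hi c => ?_⟩
  calc v c * (a * p c + b * q c) = a * (v c * p c) + b * (v c * q c) := by ring
    _ ≤ a * (v i * p i) + b * (v i * q i) := by
      grw [hp.2 i hi c, hq.2 i hi c]
    _ = v i * (a * p i + b * q i) := by ring

theorem Qset_antitone : Antitone (Qset C v) :=
  fun _ _ hST _ hp => ⟨hp.1, fun i hi => hp.2 i (hST hi)⟩

theorem mul_pos_of_mem_Qset (hv : ∀ c, 0 < v c) (hp : p ∈ Qset C v S) {i : Fin C} (hi : i ∈ S) :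
    0 < v i * p i := by
  obtain ⟨⟨-, p_sum⟩, p_max⟩ := mem_Qset_iff.1 hp
  obtain ⟨c, -, hc⟩ : ∃ c ∈ univ, (0 : ℝ) < p c := exists_lt_of_sum_lt (by simp [p_sum])
  exact (mul_pos (hv c) hc).trans_le (p_max i hi c)

theorem qvec_eq_inv_sum_smul_indicator (hv : ∀ c ∈ T, v c ≠ 0) :
    qvec C v T = (∑ l ∈ T, (v l)⁻¹)⁻¹ • (T : Set (Fin C)).indicator v⁻¹ := by
  have prod_erase_eq : ∀ l ∈ T, ∏ j ∈ T.erase l, v j = (∏ j ∈ T, v j) * (v l)⁻¹ := fun l hl => by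
    rw [← prod_erase_mul T v hl, mul_inv_cancel_right₀ (hv l hl)]
  have prod_ne : ∏ j ∈ T, v j ≠ 0 := prod_ne_zero_iff.2 hv
  ext c
  by_cases hc : c ∈ T
  · simp only [qvec, hc, if_true, Pi.smul_apply, Set.indicator_of_mem (mem_coe.2 hc), Pi.inv_apply,
      smul_eq_mul]
    rw [prod_erase_eq c hc, sum_congr rfl prod_erase_eq, ← mul_sum, mul_div_mul_left _ _ prod_ne,
      div_eq_inv_mul]
  · simp [qvec, hc]

theorem mul_qvec_eq_indicator (hv : ∀ c ∈ T, v c ≠ 0) :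
    v * qvec C v T = (T : Set (Fin C)).indicator fun _ => (∑ l ∈ T, (v l)⁻¹)⁻¹ := by
  ext c
  by_cases hc : c ∈ T
  · simp [qvec_eq_inv_sum_smul_indicator hv, hc, hv c hc, mul_left_comm (v c)]
  · simp [qvec, hc]

theorem qvec_mem_stdSimplex_s5 (hv : ∀ c ∈ T, 0 < v c) (hT : T.Nonempty) :
    qvec C v T ∈ stdSimplex ℝ (Fin C) := by
  have denom_pos := sum_inv_pos hv hT
  rw [qvec_eq_inv_sum_smul_indicator fun c hc => (hv c hc).ne']
  refine ⟨fun c => ?_, ?_⟩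
  · exact mul_nonneg (inv_pos.2 denom_pos).le
      (Set.indicator_nonneg (fun c hc => (inv_pos.2 (hv c hc)).le) c)
  · simp [← mul_sum, Set.indicator_apply, denom_pos.ne']

theorem qvec_mem_Qset (hv : ∀ c ∈ T, 0 < v c) (hT : T.Nonempty) : qvec C v T ∈ Qset C v T := by
  refine mem_Qset_iff.2 ⟨qvec_mem_stdSimplex_s5 hv hT, fun i hi c => ?_⟩
  have mul_qvec := congrFun (mul_qvec_eq_indicator (fun c hc => (hv c hc).ne'))
  simp only [Pi.mul_apply] at mul_qvec
  rw [mul_qvec, mul_qvec, Set.indicator_of_mem (mem_coe.2 hi)]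
  exact Set.indicator_apply_le' (fun _ => le_rfl) fun _ => (inv_pos.2 (sum_inv_pos hv hT)).le

theorem inv_max_smul_mem_convexHull_indicator (hv : ∀ c, 0 < v c) (hp : p ∈ Qset C v S)
    {i : Fin C} (hi : i ∈ S) :
    (v i * p i)⁻¹ • p ∈
      convexHull ℝ
        ((fun T : Finset (Fin C) => (T : Set (Fin C)).indicator v⁻¹) '' {T | S ⊆ T}) := by
  have max_pos := mul_pos_of_mem_Qset hv hp hi
  obtain ⟨⟨p_nonneg, -⟩, p_max⟩ := mem_Qset_iff.1 hp
  refine mem_convexHull_indicator_of_mem_Icc ⟨fun c => ?_, fun c => ?_⟩ fun c hc => ?_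
  · exact mul_nonneg (inv_pos.2 max_pos).le (p_nonneg c)
  · simp only [Pi.smul_apply, smul_eq_mul, Pi.inv_apply]
    rw [inv_mul_le_iff₀ max_pos, le_mul_inv_iff₀ (hv c), mul_comm]
    exact p_max i hi c
  · have mul_eq_max : v c * p c = v i * p i := le_antisymm (p_max i hi c) (p_max c hc i)
    simp only [Pi.smul_apply, smul_eq_mul, Pi.inv_apply]
    rw [inv_mul_eq_iff_eq_mul₀ max_pos.ne', eq_mul_inv_iff_mul_eq₀ (hv c).ne', mul_comm]
    exact mul_eq_max

theorem Qset_subset_convexHull (hv : ∀ c, 0 < v c) (hS : S.Nonempty) :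
    Qset C v S ⊆ convexHull ℝ (qvec C v '' {T | S ⊆ T}) := by
  intro p hp
  obtain ⟨i, hi⟩ := hS
  let coordSum : (Fin C → ℝ) →ₗ[ℝ] ℝ := ∑ c, LinearMap.proj c
  have coordSum_indicator (T : Finset (Fin C)) :
      coordSum ((T : Set (Fin C)).indicator v⁻¹) = ∑ l ∈ T, (v l)⁻¹ := by
    simp [coordSum, Set.indicator_apply]
  have coordSum_p : coordSum p = 1 := by simpa [coordSum] using hp.1.2
  have normalized_mem := inv_smul_mem_convexHull_image coordSum
    (by
      rintro _ ⟨T, hST, rfl⟩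
      exact (sum_inv_pos (fun c _ => hv c) ⟨i, hST hi⟩).trans_eq (coordSum_indicator T).symm)
    (inv_max_smul_mem_convexHull_indicator hv hp hi)
  simpa only [map_smul, coordSum_p, smul_eq_mul, mul_one, inv_inv,
    smul_inv_smul₀ (mul_pos_of_mem_Qset hv hp hi).ne', Set.image_image, coordSum_indicator,
    ← qvec_eq_inv_sum_smul_indicator fun c _ => (hv c).ne'] using normalized_mem

end Equalizing

theorem Qset_eq_convexHull_general (C : ℕ) (v : Fin C → ℝ) (hpos : ∀ c, 0 < v c)
    (S : Finset (Fin C)) (hS : S.Nonempty) :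
    Qset C v S = convexHull ℝ ((fun T => qvec C v T) '' {T : Finset (Fin C) | S ⊆ T}) := by
  refine (Qset_subset_convexHull hpos hS).antisymm (convexHull_min ?_ convex_Qset)
  rintro _ ⟨T, hST, rfl⟩
  exact Qset_antitone hST (qvec_mem_Qset (fun c _ => hpos c) (hS.mono hST))

/-- Lemma 4: for any nonempty subset of contests `S`, the set `Q_S` is the
convex hull of the equalizing points `q(T)` of all supersets `T ⊇ S`. -/
theorem Qset_eq_convexHull (C : ℕ) (v : Fin C → ℝ)
    (hpos : ∀ c, 0 < v c) (hdec : StrictAnti v) (hsum : ∑ c, v c = 1)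
    (S : Finset (Fin C)) (hS : S.Nonempty) :
    Qset C v S = convexHull ℝ ((fun T => qvec C v T) '' {T : Finset (Fin C) | S ⊆ T}) :=
  Qset_eq_convexHull_general C v hpos S hS
end
end

section
/- There exists a nonempty subset S ⊆ {1,…,C} such that the equalizing point q(S) minimizes UB over the probability simplex: UB(q(S)) ≤ UB(p) for every p ∈ Δ. -/
open Finset

noncomputable section

/-!
For `s = vᵀp` and `m = max_c v_c p_c`, `UB p` is the minimum over `θ ≤ 1` of
`1 - θ s + X / (2 Y) θ² m`, attained at some `θ > 0`. With `θ` fixed, the problem is to minimize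
`b m - a s` over the simplex, where `b > 0`. Let `L` be the value at some `p` and put
`k_c = a + L / v_c`; then `b m = ∑ c, v_c p_c k_c ≤ m ∑_{k_c > 0} k_c`, which says exactly that
`q(S)` with `S = {c | k_c > 0}` has value at most `L`. Hence no `p` does better than all `q(S)`,
of which there are finitely many.
-/

section ThresholdSet

variable {ι : Type*}

lemma sum_mul_le_mul_sum_filter_pos {R : Type*} [Ring R] [LinearOrder R] [IsOrderedRing R]
    {s : Finset ι} {w k : ι → R} {m : R}
    (hw : ∀ i ∈ s, 0 ≤ w i) (hwm : ∀ i ∈ s, w i ≤ m) :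
    ∑ i ∈ s, w i * k i ≤ m * ∑ i ∈ s with 0 < k i, k i := by
  rw [mul_sum, sum_filter]
  refine sum_le_sum fun i hi => ?_
  split_ifs with hk
  · exact mul_le_mul_of_nonneg_right (hwm i hi) hk.le
  · exact mul_nonpos_of_nonneg_of_nonpos (hw i hi) (not_lt.mp hk)

lemma exists_nonempty_div_sum_inv_le {K : Type*} [Field K] [LinearOrder K]
    [IsStrictOrderedRing K] [Fintype ι] {v w : ι → K} {a b m : K}
    (hv : ∀ i, 0 < v i) (hw : ∀ i, 0 ≤ w i) (hwm : ∀ i, w i ≤ m) (hm : 0 < m)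
    (hwv : ∑ i, w i / v i = 1) (hb : 0 < b) :
    ∃ S : Finset ι, S.Nonempty ∧
      (b - a * #S) / ∑ i ∈ S, (v i)⁻¹ ≤ b * m - a * ∑ i, w i := by
  set L := b * m - a * ∑ i, w i with hL
  let k : ι → K := fun i => a + L * (v i)⁻¹
  let S : Finset ι := {i | 0 < k i}
  have sum_w_k : ∑ i, w i * k i = m * b := calc
    ∑ i, w i * k i = ∑ i, (a * w i + L * (w i / v i)) := by
      refine sum_congr rfl fun i _ => ?_
      simp only [k]
      ring
    _ = a * ∑ i, w i + L := by rw [sum_add_distrib, ← mul_sum, ← mul_sum, hwv, mul_one]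
    _ = m * b := by rw [hL]; ring
  have b_le : b ≤ ∑ i ∈ S, k i := by
    refine le_of_mul_le_mul_left ?_ hm
    rw [← sum_w_k]
    exact sum_mul_le_mul_sum_filter_pos (fun i _ => hw i) fun i _ => hwm i
  have hS : S.Nonempty := nonempty_of_sum_ne_zero (hb.trans_le b_le).ne'
  have sum_k : ∑ i ∈ S, k i = a * #S + L * ∑ i ∈ S, (v i)⁻¹ := by
    rw [sum_add_distrib, sum_const, nsmul_eq_mul, mul_sum, mul_comm a]
  refine ⟨S, hS, ?_⟩
  rw [div_le_iff₀ (sum_pos (fun i _ => inv_pos.mpr (hv i)) hS)]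
  linarith

end ThresholdSet

section Simplex

variable {ι : Type*} [Fintype ι] {v p : ι → ℝ}

lemma sum_mul_pos_of_mem_stdSimplex (hv : ∀ i, 0 < v i) (hp : p ∈ stdSimplex ℝ ι) :
    0 < ∑ i, v i * p i := by
  obtain ⟨i, hi, hpi⟩ : ∃ i ∈ univ, p i ≠ 0 :=
    exists_ne_zero_of_sum_ne_zero (hp.2.trans_ne one_ne_zero)
  exact sum_pos' (fun j _ => mul_nonneg (hv j).le (hp.1 j))
    ⟨i, hi, mul_pos (hv i) ((hp.1 i).lt_of_ne' hpi)⟩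

lemma iSup_mul_pos_of_mem_stdSimplex (hv : ∀ i, 0 < v i) (hp : p ∈ stdSimplex ℝ ι) :
    0 < ⨆ i, v i * p i := by
  obtain ⟨i, -, hi⟩ : ∃ i ∈ univ, 0 < v i * p i :=
    exists_lt_of_sum_lt (sum_const_zero.trans_lt (sum_mul_pos_of_mem_stdSimplex hv hp))
  exact hi.trans_le (Finite.le_ciSup (fun i => v i * p i) i)

end Simplex

section EqualizingPoint

variable {C : ℕ} {v : Fin C → ℝ} {S : Finset (Fin C)}

lemma mul_qvec (hv : ∀ c ∈ S, v c ≠ 0) (c : Fin C) :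
    v c * qvec C v S c = if c ∈ S then (∑ l ∈ S, (v l)⁻¹)⁻¹ else 0 := by
  have prod_erase_eq (l : Fin C) (hl : l ∈ S) :
      ∏ j ∈ S.erase l, v j = (∏ j ∈ S, v j) * (v l)⁻¹ := by
    rw [← prod_erase_mul S v hl, mul_inv_cancel_right₀ (hv l hl)]
  unfold qvec
  split_ifs with hc
  · have hprod : ∏ j ∈ S, v j ≠ 0 := prod_ne_zero_iff.mpr hv
    rw [sum_congr rfl prod_erase_eq, ← mul_sum, prod_erase_eq c hc, mul_div_mul_left _ _ hprod,
      ← mul_div_assoc, mul_inv_cancel₀ (hv c hc), one_div]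
  · exact mul_zero _

lemma sum_mul_qvec (hv : ∀ c ∈ S, v c ≠ 0) :
    ∑ c, v c * qvec C v S c = #S * (∑ l ∈ S, (v l)⁻¹)⁻¹ := by
  simp only [mul_qvec hv, sum_ite_mem, univ_inter, sum_const, nsmul_eq_mul]

lemma iSup_mul_qvec (hv : ∀ c ∈ S, 0 < v c) (hS : S.Nonempty) :
    ⨆ c, v c * qvec C v S c = (∑ l ∈ S, (v l)⁻¹)⁻¹ := by
  obtain ⟨c, hc⟩ := hS
  have : Nonempty (Fin C) := ⟨c⟩
  have hinv : 0 ≤ (∑ l ∈ S, (v l)⁻¹)⁻¹ :=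
    inv_nonneg.mpr (sum_nonneg fun l hl => (inv_pos.mpr (hv l hl)).le)
  simp only [mul_qvec fun c hc => (hv c hc).ne']
  refine le_antisymm (ciSup_le fun d => ?_) ?_
  · split_ifs
    exacts [le_rfl, hinv]
  · refine le_ciSup_of_le (Set.finite_range _).bddAbove c ?_
    rw [if_pos hc]

end EqualizingPoint

/-- The relaxation of `UB` with parameter `θ`. It is affine in `vᵀp` and `max_c v_c p_c`, and its
minimum over `θ ≤ 1` is `UB` as soon as that maximum is positive. -/
def relaxedUB (C : ℕ) (v : Fin C → ℝ) (X Y θ : ℝ) (p : Fin C → ℝ) : ℝ :=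
  1 - θ * (∑ c, v c * p c) + X / (2 * Y) * θ ^ 2 * ⨆ c, v c * p c

section Relaxation

variable {C : ℕ} {v p : Fin C → ℝ} {X Y : ℝ}

lemma UB_le_relaxedUB {θ : ℝ} (hX : 0 < X) (hY : 0 < Y) (hm : 0 < ⨆ c, v c * p c) (hθ : θ ≤ 1) :
    UB C v X Y p ≤ relaxedUB C v X Y θ p := by
  unfold UB relaxedUB
  set s := ∑ c, v c * p c
  set m := ⨆ c, v c * p c
  split_ifs with h
  · have gap : 1 - θ * s + X / (2 * Y) * θ ^ 2 * m - (1 - Y / (2 * X) * s ^ 2 / m)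
        = X / (2 * Y) * m * (θ - Y * s / (X * m)) ^ 2 := by
      field_simp
      ring
    have : 0 ≤ X / (2 * Y) * m * (θ - Y * s / (X * m)) ^ 2 := by positivity
    linarith
  · have gap : 1 - θ * s + X / (2 * Y) * θ ^ 2 * m - (1 - s + X / (2 * Y) * m)
        = X / (2 * Y) * (1 - θ) * (2 * (Y / X * s - m) + (1 - θ) * m) := by
      field_simp
      ring
    have : 0 ≤ 1 - θ := sub_nonneg.mpr hθ
    have : 0 ≤ Y / X * s - m := sub_nonneg.mpr (not_le.mp h).le
    have : 0 ≤ X / (2 * Y) * (1 - θ) * (2 * (Y / X * s - m) + (1 - θ) * m) := by positivity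
    linarith

lemma exists_relaxedUB_eq_UB (hX : 0 < X) (hY : 0 < Y) (hs : 0 < ∑ c, v c * p c)
    (hm : 0 < ⨆ c, v c * p c) :
    ∃ θ, 0 < θ ∧ θ ≤ 1 ∧ relaxedUB C v X Y θ p = UB C v X Y p := by
  unfold UB relaxedUB
  set s := ∑ c, v c * p c
  set m := ⨆ c, v c * p c
  split_ifs with h
  · refine ⟨Y / X * s / m, by positivity, (div_le_one hm).mpr h, ?_⟩
    field_simp
    ring
  · exact ⟨1, one_pos, le_rfl, by ring⟩

lemma exists_relaxedUB_qvec_le {θ : ℝ} (hv : ∀ c, 0 < v c) (hX : 0 < X) (hY : 0 < Y) (hθ : 0 < θ)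
    (hp : p ∈ stdSimplex ℝ (Fin C)) :
    ∃ S : Finset (Fin C), S.Nonempty ∧
      relaxedUB C v X Y θ (qvec C v S) ≤ relaxedUB C v X Y θ p := by
  have sum_div : ∑ c, v c * p c / v c = 1 := by
    simpa only [mul_div_cancel_left₀ _ (hv _).ne'] using hp.2
  obtain ⟨S, hS, hle⟩ := exists_nonempty_div_sum_inv_le (a := θ) (b := X / (2 * Y) * θ ^ 2) hv
    (fun c => mul_nonneg (hv c).le (hp.1 c)) (Finite.le_ciSup fun c => v c * p c)
    (iSup_mul_pos_of_mem_stdSimplex hv hp) sum_div (by positivity)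
  refine ⟨S, hS, ?_⟩
  rw [div_eq_mul_inv] at hle
  unfold relaxedUB
  rw [sum_mul_qvec fun c _ => (hv c).ne', iSup_mul_qvec (fun c _ => hv c) hS]
  linarith

lemma exists_UB_qvec_le (hv : ∀ c, 0 < v c) (hX : 0 < X) (hY : 0 < Y)
    (hp : p ∈ stdSimplex ℝ (Fin C)) :
    ∃ S : Finset (Fin C), S.Nonempty ∧ UB C v X Y (qvec C v S) ≤ UB C v X Y p := by
  obtain ⟨θ, hθ, hθ1, hθ_eq⟩ := exists_relaxedUB_eq_UB hX hY
    (sum_mul_pos_of_mem_stdSimplex hv hp) (iSup_mul_pos_of_mem_stdSimplex hv hp)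
  obtain ⟨S, hS, hle⟩ := exists_relaxedUB_qvec_le hv hX hY hθ hp
  have iSup_pos : 0 < ⨆ c, v c * qvec C v S c := by
    rw [iSup_mul_qvec (fun c _ => hv c) hS]
    exact inv_pos.mpr (sum_pos (fun c _ => inv_pos.mpr (hv c)) hS)
  exact ⟨S, hS, (UB_le_relaxedUB hX hY iSup_pos hθ1).trans (hle.trans_eq hθ_eq)⟩

theorem exists_equalizing_minimizer_general (hC : 0 < C) (hv : ∀ c, 0 < v c)
    (hX : 0 < X) (hY : 0 < Y) :
    ∃ S : Finset (Fin C), S.Nonempty ∧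
      ∀ p ∈ stdSimplex ℝ (Fin C), UB C v X Y (qvec C v S) ≤ UB C v X Y p := by
  have : Nonempty {S : Finset (Fin C) // S.Nonempty} := ⟨{⟨0, hC⟩}, singleton_nonempty _⟩
  obtain ⟨⟨S, hS⟩, hmin⟩ := Finite.exists_min
    fun S : {S : Finset (Fin C) // S.Nonempty} => UB C v X Y (qvec C v S)
  refine ⟨S, hS, fun p hp => ?_⟩
  obtain ⟨T, hT, hle⟩ := exists_UB_qvec_le hv hX hY hp
  exact (hmin ⟨T, hT⟩).trans hle

end Relaxation

/-- Lemma 7: some equalizing point `q(S)` minimizes `UB` over the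
probability simplex. -/
theorem exists_equalizing_minimizer (C : ℕ) (hC : 0 < C) (v : Fin C → ℝ)
    (hpos : ∀ c, 0 < v c) (hdec : StrictAnti v) (hsum : ∑ c, v c = 1)
    (X Y : ℝ) (hX : 0 < X) (hY : 0 < Y) :
    ∃ S : Finset (Fin C), S.Nonempty ∧
      ∀ p ∈ stdSimplex ℝ (Fin C), UB C v X Y (qvec C v S) ≤ UB C v X Y p :=
  exists_equalizing_minimizer_general hC hpos hX hY
end
end
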